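/- Suppose $Y$ is a boundedly compact metric space, $X \subset Y$, $\varrho$ is the geodesic (intrinsic) pseudometric on $X$ defined via lengths of continuous paths in $X$, $\varrho$ is continuous, $a, x \in X$, and $b = \varrho(a,x) < \infty$. Then there exists a map $g : \mathbf{R} \to Y$ with $g(0) = a$, $g(b) = x$, $\mathrm{Lip}\, g \leq 1$, and $\varrho(a, g(\upsilon)) = \upsilon$ whenever $0 \leq \upsilon \leq b$ and $g(\upsilon) \in X$. -/

import Mathlib

/-!
A curve of finite length can be run through at unit speed, because its variation function is
continuous. Hence there are `1`-Lipschitz curves `γₙ` in `X` with `γₙ 0 = a`, `γₙ Lₙ = x` and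
`Lₙ → b`. The `1`-Lipschitz maps `ℝ → Y` sending `0` to `a` form a compact set for pointwise
convergence, so the `γₙ` converge along an ultrafilter to some `g`, which may leave `X`. Whenever
`g u ∈ X`, the bounds `ρ(a, γₙ u) ≤ u` and `ρ(γₙ u, x) ≤ Lₙ - u` pass to the limit by lower
semicontinuity: `ρ(a, g u) ≤ u` and `ρ(g u, x) ≤ b - u`. As `ρ(a, x) = b`, the triangle inequality
forces equality in the first.
-/

open Set Filter Topology
open scoped ENNReal NNReal

theorem le_of_lowerSemicontinuousWithinAt_of_tendsto {ι E β : Type*} [TopologicalSpace E]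
    [TopologicalSpace β] [LinearOrder β] [OrderClosedTopology β] [DenselyOrdered β]
    {l : Filter ι} [l.NeBot] {F : E → β} {s : Set E} {y : ι → E} {y₀ : E} {c : ι → β} {c₀ : β}
    (hF : LowerSemicontinuousWithinAt F s y₀) (hy : Tendsto y l (𝓝[s] y₀))
    (hc : Tendsto c l (𝓝 c₀)) (hFc : ∀ᶠ i in l, F (y i) ≤ c i) : F y₀ ≤ c₀ := by
  refine le_of_forall_lt_imp_le_of_dense fun d hd => ge_of_tendsto hc ?_
  filter_upwards [hy.eventually (hF d hd), hFc] with i hdF hFc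
  exact hdF.le.trans hFc

theorem isCompact_setOf_lipschitzWith_of_apply_eq {α Y : Type*} [PseudoMetricSpace α]
    [MetricSpace Y] [ProperSpace Y] (K : ℝ≥0) (t₀ : α) (y₀ : Y) :
    IsCompact {g : α → Y | LipschitzWith K g ∧ g t₀ = y₀} := by
  have hbox : IsCompact (univ.pi fun t => Metric.closedBall y₀ (K * dist t t₀)) :=
    isCompact_univ_pi fun t => isCompact_closedBall y₀ _
  refine hbox.of_isClosed_subset ?_ ?_
  · exact (isClosed_setOfPred_lipschitzWith K).inter
      (isClosed_eq (continuous_apply t₀) continuous_const)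
  · rintro g ⟨hg, rfl⟩ t -
    exact hg.dist_le_mul t t₀

theorem eVariationOn_comp_sub_const {α E : Type*} [AddCommGroup α] [LinearOrder α]
    [IsOrderedAddMonoid α] [PseudoEMetricSpace E] (f : α → E) (s t c : α) :
    eVariationOn (fun u => f (u - c)) (Icc s t) = eVariationOn f (Icc (s - c) (t - c)) := by
  rw [← image_sub_const_Icc]
  exact eVariationOn.comp_eq_of_monotoneOn f _ fun u _ v _ huv => sub_le_sub_right huv c

theorem lipschitzOnWith_of_hasConstantSpeedOnWith {E : Type*} [PseudoEMetricSpace E] {f : ℝ → E}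
    {s : Set ℝ} {l : ℝ≥0} (hf : HasConstantSpeedOnWith f s l) : LipschitzOnWith l f s := by
  intro x hx y hy
  wlog hxy : x ≤ y generalizing x y
  · rw [edist_comm, edist_comm x]
    exact this hy hx (le_of_not_ge hxy)
  calc edist (f x) (f y) ≤ eVariationOn f (s ∩ Icc x y) :=
        eVariationOn.edist_le f ⟨hx, left_mem_Icc.2 hxy⟩ ⟨hy, right_mem_Icc.2 hxy⟩
    _ = ENNReal.ofReal (l * (y - x)) := hf hx hy
    _ = l * edist x y := by
      rw [ENNReal.ofReal_mul l.coe_nonneg, ENNReal.ofReal_coe_nnreal, edist_comm, edist_dist,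
        Real.dist_eq, abs_of_nonneg (sub_nonneg.2 hxy)]

theorem continuousOn_variationOnFromTo {α E : Type*} [LinearOrder α] [TopologicalSpace α]
    [OrderTopology α] [PseudoMetricSpace E] {f : α → E} {s : Set α} (hf : ContinuousOn f s)
    (hfs : LocallyBoundedVariationOn f s) {a : α} (ha : a ∈ s) :
    ContinuousOn (variationOnFromTo f s a) s := by
  intro t ht
  have hleft : ContinuousWithinAt (variationOnFromTo f s a) (s ∩ Iio t) t := by
    simpa using! variationOnFromTo.tendsto_left ha ht hfs
      ((hf t ht).mono inter_subset_left)
  have hright : ContinuousWithinAt (variationOnFromTo f s a) (s ∩ Ioi t) t := by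
    simpa using! variationOnFromTo.tendsto_right ha ht hfs
      ((hf t ht).mono inter_subset_left)
  rw [← continuousWithinAt_sdiff_self]
  exact (hleft.union hright).mono (by grind)

theorem exists_lipschitzWith_one_reparametrization {Y : Type*} [MetricSpace Y] {f : ℝ → Y}
    {s t : ℝ} (hst : s ≤ t) (hf : ContinuousOn f (Icc s t))
    (hfin : BoundedVariationOn f (Icc s t)) :
    ∃ g : ℝ → Y, LipschitzWith 1 g ∧ (∀ u, g u ∈ f '' Icc s t) ∧ g 0 = f s ∧
      g (eVariationOn f (Icc s t)).toReal = f t := by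
  have hs : s ∈ Icc s t := left_mem_Icc.2 hst
  have ht : t ∈ Icc s t := right_mem_Icc.2 hst
  set L : ℝ := (eVariationOn f (Icc s t)).toReal
  have hL : 0 ≤ L := ENNReal.toReal_nonneg
  set V : ℝ → ℝ := variationOnFromTo f (Icc s t) s
  have hfs := hfin.locallyBoundedVariationOn
  have hVs : V s = 0 := variationOnFromTo.self f _ s
  have hVt : V t = L := by simp only [V, L, variationOnFromTo.eq_of_le f _ hst, inter_self]
  have hV : V '' Icc s t = Icc 0 L := by
    rw [← hVs, ← hVt]
    exact (continuousOn_variationOnFromTo hf hfs hs).image_Icc_of_monotoneOn hst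
      (variationOnFromTo.monotoneOn hfs hs)
  set G : ℝ → Y := naturalParameterization f (Icc s t) s
  have hGV : ∀ w ∈ Icc s t, G (V w) = f w := fun w hw =>
    edist_eq_zero.1 (edist_naturalParameterization_eq_zero hfs hs hw)
  have hG : LipschitzOnWith 1 G (Icc 0 L) :=
    hV ▸ lipschitzOnWith_of_hasConstantSpeedOnWith
      (has_unit_speed_naturalParameterization f hfs hs)
  refine ⟨fun u => G (projIcc 0 L hL u), ?_, fun u => ?_, ?_, ?_⟩
  · simpa only [one_mul] using! hG.to_restrict.comp (LipschitzWith.projIcc hL)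
  · obtain ⟨w, hw, hwu⟩ := hV.ge (projIcc 0 L hL u).2
    exact ⟨w, hw, by simpa only [hwu] using (hGV w hw).symm⟩
  · simpa only [projIcc_left, hVs] using hGV s hs
  · simpa only [projIcc_right, hVt] using hGV t ht

/-- The intrinsic (geodesic) pseudometric of a subset `X`: the infimum of the lengths of the paths
in `X` from `a` to `x`. It is `∞` if there is no such path of finite length. A path is the
restriction to a compact interval of a continuous map `ℝ → X`. -/
noncomputable def intrinsicEDist {Y : Type*} [PseudoEMetricSpace Y] (X : Set Y) (a x : Y) : ℝ≥0∞ :=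
  ⨅ (g : ℝ → Y) (_ : Continuous g) (_ : ∀ t, g t ∈ X)
    (s : ℝ) (t : ℝ) (_ : s ≤ t) (_ : g s = a) (_ : g t = x), eVariationOn g (Icc s t)

section intrinsicEDist

section PseudoEMetricSpace

variable {Y : Type*} [PseudoEMetricSpace Y] {X : Set Y}

theorem intrinsicEDist_le_eVariationOn {g : ℝ → Y} (hg : Continuous g) (hgX : ∀ t, g t ∈ X)
    {s t : ℝ} (hst : s ≤ t) : intrinsicEDist X (g s) (g t) ≤ eVariationOn g (Icc s t) :=
  iInf_le_of_le g <| iInf_le_of_le hg <| iInf_le_of_le hgX <| iInf_le_of_le s <|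
    iInf_le_of_le t <| iInf_le_of_le hst <| iInf_le_of_le rfl <| iInf_le _ rfl

theorem intrinsicEDist_le_mul_of_lipschitzWith {K : ℝ≥0} {g : ℝ → Y} (hg : LipschitzWith K g)
    (hgX : ∀ t, g t ∈ X) {s t : ℝ} (hst : s ≤ t) :
    intrinsicEDist X (g s) (g t) ≤ K * ENNReal.ofReal (t - s) :=
  calc intrinsicEDist X (g s) (g t) ≤ eVariationOn (g ∘ id) (Icc s t) :=
        intrinsicEDist_le_eVariationOn hg.continuous hgX hst
    _ ≤ K * eVariationOn id (Icc s t) :=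
        (hg.lipschitzOnWith (s := univ)).comp_eVariationOn_le (mapsTo_univ _ _)
    _ = K * ENNReal.ofReal (t - s) := by rw [eVariationOn_id_Icc]

theorem intrinsicEDist_le_eVariationOn_add_eVariationOn {g h : ℝ → Y} (hg : Continuous g)
    (hgX : ∀ t, g t ∈ X) (hh : Continuous h) (hhX : ∀ t, h t ∈ X) {r s t : ℝ} (hrs : r ≤ s)
    (hst : s ≤ t) (hgh : g s = h s) :
    intrinsicEDist X (g r) (h t) ≤ eVariationOn g (Icc r s) + eVariationOn h (Icc s t) := by
  let k : ℝ → Y := fun u => if u ≤ s then g u else h u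
  have hk : Continuous k := hg.if_le hh continuous_id continuous_const (by rintro u rfl; exact hgh)
  have hkX : ∀ u, k u ∈ X := fun u => by grind
  have hkg : EqOn k g (Icc r s) := fun u hu => if_pos hu.2
  have hkh : EqOn k h (Icc s t) := fun u hu => by grind
  calc intrinsicEDist X (g r) (h t) = intrinsicEDist X (k r) (k t) := by
        rw [hkg (left_mem_Icc.2 hrs), hkh (right_mem_Icc.2 hst)]
    _ ≤ eVariationOn k (Icc r t) := intrinsicEDist_le_eVariationOn hk hkX (hrs.trans hst)
    _ = eVariationOn k (Icc r s) + eVariationOn k (Icc s t) := by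
        simpa using (eVariationOn.Icc_add_Icc k (s := univ) hrs hst (mem_univ s)).symm
    _ = eVariationOn g (Icc r s) + eVariationOn h (Icc s t) := by
        rw [eVariationOn.congr hkg, eVariationOn.congr hkh]

theorem intrinsicEDist_triangle (X : Set Y) (a y x : Y) :
    intrinsicEDist X a x ≤ intrinsicEDist X a y + intrinsicEDist X y x := by
  rw [intrinsicEDist.eq_def X a y, intrinsicEDist.eq_def X y x]
  simp only [ENNReal.iInf_add, ENNReal.add_iInf, le_iInf_iff]
  rintro h hh hhX s' t' hst' rfl rfl g hg hgX s t hst rfl hgh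
  simpa [eVariationOn_comp_sub_const] using
    intrinsicEDist_le_eVariationOn_add_eVariationOn hg hgX
      (h := fun u => h (u - (t - s'))) (by fun_prop) (fun u => hhX _) hst
      (t := t' + (t - s')) (by linarith) (by simpa using hgh)

theorem intrinsicEDist_eq_of_le_of_le {a y x : Y} {c d : ℝ≥0∞} (hay : intrinsicEDist X a y ≤ c)
    (hyx : intrinsicEDist X y x ≤ d) (hd : d ≠ ∞) (hax : c + d ≤ intrinsicEDist X a x) :
    intrinsicEDist X a y = c := by
  refine le_antisymm hay (ENNReal.le_of_add_le_add_right hd ?_)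
  calc c + d ≤ intrinsicEDist X a x := hax
    _ ≤ intrinsicEDist X a y + intrinsicEDist X y x := intrinsicEDist_triangle X a y x
    _ ≤ intrinsicEDist X a y + d := by gcongr

end PseudoEMetricSpace

section MetricSpace

variable {Y : Type*} [MetricSpace Y] {X : Set Y} {a x : Y}

theorem exists_lipschitzWith_one_of_intrinsicEDist_lt {c : ℝ}
    (h : intrinsicEDist X a x < ENNReal.ofReal c) :
    ∃ (g : ℝ → Y) (L : ℝ), LipschitzWith 1 g ∧ (∀ u, g u ∈ X) ∧ g 0 = a ∧ g L = x ∧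
      0 ≤ L ∧ L < c := by
  simp only [intrinsicEDist, iInf_lt_iff] at h
  obtain ⟨f, hf, hfX, s, t, hst, rfl, rfl, hlt⟩ := h
  obtain ⟨g, hg, hgf, hg0, hgL⟩ :=
    exists_lipschitzWith_one_reparametrization hst hf.continuousOn hlt.ne_top
  refine ⟨g, _, hg, fun u => ?_, hg0, hgL, ENNReal.toReal_nonneg,
    (ENNReal.lt_ofReal_iff_toReal_lt hlt.ne_top).1 hlt⟩
  obtain ⟨w, -, hw⟩ := hgf u
  exact hw ▸ hfX w

theorem exists_seq_lipschitzWith_one_tendsto_intrinsicEDist {b : ℝ} (hb₀ : 0 ≤ b)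
    (hb : intrinsicEDist X a x = ENNReal.ofReal b) :
    ∃ (γ : ℕ → ℝ → Y) (L : ℕ → ℝ), (∀ n, LipschitzWith 1 (γ n)) ∧ (∀ n u, γ n u ∈ X) ∧
      (∀ n, γ n 0 = a) ∧ (∀ n, γ n (L n) = x) ∧ (∀ n, b ≤ L n) ∧ Tendsto L atTop (𝓝 b) := by
  have hlt (n : ℕ) : intrinsicEDist X a x < ENNReal.ofReal (b + 1 / ((n : ℝ) + 1)) := by
    have hn : 0 < 1 / ((n : ℝ) + 1) := Nat.one_div_pos_of_nat
    rw [hb]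
    exact (ENNReal.ofReal_lt_ofReal_iff (by positivity)).2 (by linarith)
  choose γ L hγ hγX hγa hγx hL₀ hL using
    fun n => exists_lipschitzWith_one_of_intrinsicEDist_lt (hlt n)
  have hbL (n : ℕ) : b ≤ L n := by
    have := intrinsicEDist_le_mul_of_lipschitzWith (hγ n) (hγX n) (hL₀ n)
    rw [hγa, hγx, hb, ENNReal.coe_one, one_mul, sub_zero] at this
    exact (ENNReal.ofReal_le_ofReal_iff (hL₀ n)).1 this
  refine ⟨γ, L, hγ, hγX, hγa, hγx, hbL, tendsto_of_tendsto_of_tendsto_of_le_of_le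
    tendsto_const_nhds ?_ hbL fun n => (hL n).le⟩
  simpa using tendsto_one_div_add_atTop_nhds_zero_nat.const_add b

end MetricSpace

end intrinsicEDist

theorem existence_minimising_path_general {Y : Type*} [MetricSpace Y] [ProperSpace Y] {X : Set Y}
    {a x : Y} (ha : LowerSemicontinuousOn (fun y => intrinsicEDist X a y) X)
    (hx : LowerSemicontinuousOn (fun y => intrinsicEDist X y x) X) {b : ℝ} (hb₀ : 0 ≤ b)
    (hb : intrinsicEDist X a x = ENNReal.ofReal b) :
    ∃ g : ℝ → Y, g 0 = a ∧ g b = x ∧ LipschitzWith 1 g ∧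
      ∀ u : ℝ, 0 ≤ u → u ≤ b → g u ∈ X → intrinsicEDist X a (g u) = ENNReal.ofReal u := by
  obtain ⟨γ, L, hγ, hγX, hγa, hγx, hbL, hL⟩ :=
    exists_seq_lipschitzWith_one_tendsto_intrinsicEDist hb₀ hb
  let U : Ultrafilter ℕ := hyperfilter ℕ
  replace hL : Tendsto L U (𝓝 b) := hL.mono_left Nat.hyperfilter_le_atTop
  obtain ⟨g, ⟨hg, hga⟩, hUg⟩ :=
    (isCompact_setOf_lipschitzWith_of_apply_eq 1 (0 : ℝ) a).ultrafilter_le_nhds'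
      (U.map γ) (Ultrafilter.mem_map.2 <| Eventually.of_forall fun n => ⟨hγ n, hγa n⟩)
  have hγg (u : ℝ) : Tendsto (fun n => γ n u) U (𝓝[X] g u) :=
    tendsto_nhdsWithin_iff.2 ⟨tendsto_pi_nhds.1 hUg u, .of_forall fun n => hγX n u⟩
  have hγb : Tendsto (fun n => γ n b) U (𝓝 x) := by
    refine tendsto_iff_dist_tendsto_zero.2 <| squeeze_zero (fun _ => dist_nonneg) (fun n => ?_)
      (tendsto_iff_dist_tendsto_zero.1 hL)
    simpa [hγx n, dist_comm] using (hγ n).dist_le_mul b (L n)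
  have hgb : g b = x := tendsto_nhds_unique (tendsto_nhds_of_tendsto_nhdsWithin (hγg b)) hγb
  refine ⟨g, hga, hgb, hg, fun u hu₀ hub hgu => ?_⟩
  have hau : intrinsicEDist X a (g u) ≤ ENNReal.ofReal u :=
    le_of_lowerSemicontinuousWithinAt_of_tendsto (ha _ hgu) (hγg u) tendsto_const_nhds <|
      .of_forall fun n => by
        simpa [hγa n] using intrinsicEDist_le_mul_of_lipschitzWith (hγ n) (hγX n) hu₀
  have hux : intrinsicEDist X (g u) x ≤ ENNReal.ofReal (b - u) :=
    le_of_lowerSemicontinuousWithinAt_of_tendsto (F := (intrinsicEDist X · x)) (hx _ hgu) (hγg u)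
      (ENNReal.tendsto_ofReal (hL.sub_const u)) <| .of_forall fun n => by
        simpa [hγx n] using
          intrinsicEDist_le_mul_of_lipschitzWith (hγ n) (hγX n) (hub.trans (hbL n))
  refine intrinsicEDist_eq_of_le_of_le hau hux ENNReal.ofReal_ne_top ?_
  rw [← ENNReal.ofReal_add hu₀ (sub_nonneg.2 hub), add_sub_cancel, hb]

/-- existence of a unit-speed minimising path (with values in the ambient
boundedly compact space `Y`) for the geodesic pseudometric `ρ` of `X ⊆ Y`, defined via
infima of lengths (total variations) of continuous paths in `X`. -/
theorem existence_minimising_path {Y : Type*} [MetricSpace Y] [ProperSpace Y] (X : Set Y)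
    (ρ : Y → Y → ENNReal)
    (hρ : ∀ a x, ρ a x = ⨅ (g : ℝ → Y) (_ : Continuous g) (_ : ∀ t, g t ∈ X)
      (s : ℝ) (t : ℝ) (_ : s ≤ t) (_ : g s = a) (_ : g t = x),
        eVariationOn g (Set.Icc s t))
    (hcont : ContinuousOn (fun p : Y × Y => ρ p.1 p.2) (X ×ˢ X))
    (a x : Y) (ha : a ∈ X) (hx : x ∈ X) (b : ℝ) (hb0 : 0 ≤ b)
    (hb : ρ a x = ENNReal.ofReal b) :
    ∃ g : ℝ → Y, g 0 = a ∧ g b = x ∧ LipschitzWith 1 g ∧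
      ∀ υ : ℝ, 0 ≤ υ → υ ≤ b → g υ ∈ X → ρ a (g υ) = ENNReal.ofReal υ := by
  obtain rfl : ρ = intrinsicEDist X := funext₂ hρ
  exact existence_minimising_path_general (hcont.uncurry_left a ha).lowerSemicontinuousOn
    (hcont.uncurry_right x hx).lowerSemicontinuousOn hb0 hb
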